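/- arXiv:1502.02770 — 2 statements merged into one kernel-verified Lean document; each statement's English description precedes it below -/
import Mathlib

section
/- Let V be a finite-dimensional Gel'fand–Dorfman bialgebra over ℂ such that either (V,∘) is a simple Novikov algebra, or there exists x ∈ V and k ∈ ℂ∖{0} with b∘x = k·b for all b ∈ V. Let n be a natural number and let d^0,…,d^n be linear maps from V into the space of polynomial maps ℂ → V satisfying the conformal derivation equation (E). Then d^i = 0 for all i > 3, and the maps d^0, d^1, d^2, d^3 (set d^i = 0 for i > n) satisfy identities (D1)–(D13) for all a, b ∈ V and λ ∈ ℂ. -/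
/-- The identities (D1)–(D13) of Theorem 4.3(2) for maps `d^0, d^1, d^2, d^3`
(given as `d 0, d 1, d 2, d 3`) on the Gel'fand–Dorfman bialgebra `(V, circ, br)`. -/
def DIdentities {V : Type*} [AddCommGroup V] [Module ℂ V]
    (circ br : V →ₗ[ℂ] V →ₗ[ℂ] V) (d : ℕ → V →ₗ[ℂ] (ℂ → V)) : Prop :=
  ∀ (a b : V) (l : ℂ),
    -- (D1)
    (d 3 (circ b a) l = d 3 (circ a b) l ∧ d 3 (circ a b) l = circ (d 3 b l) a)
    -- (D2)
    ∧ circ b (d 3 a l) = circ a (d 3 b l)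
    -- (D3)
    ∧ (2 : ℂ) • circ (d 3 b l) a + circ a (d 3 b l) = 0
    -- (D4)
    ∧ l • d 3 (circ b a) l + d 2 (circ b a) l + d 3 (br b a) l
        = br (d 3 b l) a + circ (d 2 b l) a
    -- (D5)
    ∧ d 2 (circ a b + circ b a) l
        = (2 : ℂ) • circ (d 2 b l) a + (circ (d 2 b l) a + circ a (d 2 b l))
          + (3 : ℂ) • br (d 3 b l) a
    -- (D6)
    ∧ (-(3 * l)) • circ b (d 3 a l) + circ b (d 2 a l) + circ (d 2 b l) a
        + (2 : ℂ) • (circ (d 2 b l) a + circ a (d 2 b l))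
        + (3 : ℂ) • br (d 3 b l) a = 0
    -- (D7)
    ∧ (-(4 * l)) • (circ (d 3 a l) b + circ b (d 3 a l))
        + (circ (d 2 a l) b + circ b (d 2 a l)) - br b (d 3 a l)
        + (circ (d 2 b l) a + circ a (d 2 b l)) + br (d 3 b l) a = 0
    -- (D8)
    ∧ l • d 2 (circ b a) l + d 1 (circ b a) l + d 2 (br b a) l
        = circ (d 1 b l) a + br (d 2 b l) a
    -- (D9)
    ∧ d 1 (circ a b + circ b a) l
        = (∑ i ∈ Finset.Icc (1 : ℕ) 3, ((-1 : ℂ) ^ i * l ^ (i - 1)) • circ b (d i a l))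
          + circ (d 1 b l) a + (circ (d 1 b l) a + circ a (d 1 b l))
          + (2 : ℂ) • br (d 2 b l) a
    -- (D10)
    ∧ (∑ i ∈ Finset.Icc (1 : ℕ) 3, ((-1 : ℂ) ^ i * (Nat.choose (i + 1) 2 : ℂ) * l ^ (i - 1)) •
          (circ (d i a l) b + circ b (d i a l)))
        + (∑ i ∈ Finset.Icc (2 : ℕ) 3, ((-1 : ℂ) ^ i * (Nat.choose i 2 : ℂ) * l ^ (i - 2)) •
          br b (d i a l))
        + (circ (d 1 b l) a + circ a (d 1 b l)) + br (d 2 b l) a = 0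
    -- (D11)
    ∧ l • d 1 (circ b a) l + d 0 (circ b a) l + d 1 (br b a) l
        = (∑ i ∈ Finset.range 4, ((-1 : ℂ) ^ i * l ^ i) • circ b (d i a l))
          + circ (d 0 b l) a + br (d 1 b l) a
    -- (D12)
    ∧ d 0 (circ a b + circ b a) l
        = (∑ i ∈ Finset.range 4, ((-1 : ℂ) ^ i * ((i : ℂ) + 1) * l ^ i) •
            (circ (d i a l) b + circ b (d i a l)))
          + (∑ i ∈ Finset.Icc (1 : ℕ) 3, ((-1 : ℂ) ^ i * (i : ℂ) * l ^ (i - 1)) • br b (d i a l))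
          + (circ (d 0 b l) a + circ a (d 0 b l)) + br (d 1 b l) a
    -- (D13)
    ∧ l • d 0 (circ b a) l + d 0 (br b a) l
        = (∑ i ∈ Finset.range 4, ((-1 : ℂ) ^ i * l ^ (i + 1)) •
            (circ (d i a l) b + circ b (d i a l)))
          + (∑ i ∈ Finset.range 4, ((-1 : ℂ) ^ i * l ^ i) • br b (d i a l))
          + br (d 0 b l) a

/-- The conformal derivation equation (E) for a family `d^0, …, d^n` of linear maps
from `V` into maps `ℂ → V`, on the quadratic Lie conformal algebra of the
Gel'fand–Dorfman bialgebra `(V, circ, br)`; the formal variable `∂` is evaluated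
at `x : ℂ`. -/
def ConfDerEq {V : Type*} [AddCommGroup V] [Module ℂ V]
    (circ br : V →ₗ[ℂ] V →ₗ[ℂ] V) (n : ℕ) (d : ℕ → V →ₗ[ℂ] (ℂ → V)) : Prop :=
  ∀ (a b : V) (l m x : ℂ),
    (x + l) • (∑ i ∈ Finset.range (n + 1), x ^ i • d i (circ b a) l)
      + m • (∑ i ∈ Finset.range (n + 1), x ^ i • d i (circ a b + circ b a) l)
      + (∑ i ∈ Finset.range (n + 1), x ^ i • d i (br b a) l)
    = (∑ i ∈ Finset.range (n + 1), (-l - m) ^ i •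
        (x • circ b (d i a l) + (l + m) • (circ (d i a l) b + circ b (d i a l))
          + br b (d i a l)))
      + (∑ i ∈ Finset.range (n + 1), (m + x) ^ i •
        (x • circ (d i b l) a + m • (circ (d i b l) a + circ a (d i b l))
          + br (d i b l) a))

/-- `(V, circ)` is a simple Novikov algebra: it has only the trivial ideals and the
product is not identically zero. -/
def NovikovSimple {V : Type*} [AddCommGroup V] [Module ℂ V]
    (circ : V →ₗ[ℂ] V →ₗ[ℂ] V) : Prop :=
  (∃ a b : V, circ a b ≠ 0)
    ∧ ∀ I : Submodule ℂ V,
        (∀ a ∈ I, ∀ b : V, circ a b ∈ I ∧ circ b a ∈ I) → I = ⊥ ∨ I = ⊤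

/-!
Write `D_x(a) = ∑ i, x ^ i d^i_λ(a)`, and let `e` satisfy `b∘e = k b` for all `b`, with `k ≠ 0`.

Putting `a = e`, `μ = 0` in (E) and comparing coefficients of `x ^ i` for `2 ≤ i` gives
`λ k d^i_λ(b) = [d^i_λ(b), e] - d^i_λ([b, e])`. For `b = e` this makes `d^i_λ(e)` an eigenvector
with eigenvalue `λ` of an operator independent of `λ`; being polynomial in `λ`, it vanishes.
So `D_x(e)` is affine in `x`, and (E) with `b = e` takes the form `x D_x = T(D_x) +` (quadratic
in `x`) with `T` linear and independent of `x`. A comparison of degrees shows that `D_x` is affine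
in `x`, so (E) is a quadratic identity in `x` and `μ`, whose coefficients are the required
identities.

In a simple Novikov algebra the commuting right multiplications `R c` have a common eigenvector,
with eigenvalues `χ c`. Generalized eigenspaces of `R c` are ideals, so `R c - χ c` is nilpotent;
the trace of `⁅L b, R c⁆ = R (b∘c) - R c * R b` then shows that `χ` is multiplicative, hence that
the common eigenspace is an ideal too. Therefore `b∘c = χ c b` for all `b` and `c`.
-/

section PolynomialMaps

variable {K V : Type*} [Field K] [AddCommGroup V] [Module K V]

/-- The space of `V`-valued polynomial maps on `K` of degree less than `N`; compare
`Polynomial.degreeLT`. Elements are honest functions `K → V`, so over a finite field the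
coefficients would not be determined. -/
def polyMapDegreeLT (K V : Type*) [Field K] [AddCommGroup V] [Module K V] (N : ℕ) :
    Submodule K (K → V) where
  carrier := {f | ∃ v : ℕ → V, ∀ x, f x = ∑ i ∈ Finset.range N, x ^ i • v i}
  zero_mem' := ⟨0, by simp⟩
  add_mem' := by
    rintro f g ⟨v, hv⟩ ⟨w, hw⟩
    exact ⟨v + w, fun x => by simp [hv, hw, Finset.sum_add_distrib]⟩
  smul_mem' := by
    rintro c f ⟨v, hv⟩
    exact ⟨c • v, fun x => by simp [hv, Finset.smul_sum, smul_comm c]⟩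

namespace polyMapDegreeLT

lemma pow_smul_mem {N i : ℕ} (hi : i < N) (v : V) :
    (fun x : K => x ^ i • v) ∈ polyMapDegreeLT K V N :=
  ⟨Pi.single i v, fun x => by simp [Pi.single_apply, hi]⟩

lemma sum_pow_smul_mem {s : Finset ℕ} {N : ℕ} (e : ℕ → ℕ) (hs : ∀ i ∈ s, e i < N) (v : ℕ → V) :
    (fun x : K => ∑ i ∈ s, x ^ e i • v i) ∈ polyMapDegreeLT K V N := by
  simpa only [Finset.sum_fn] using Submodule.sum_mem _ fun i hi => pow_smul_mem (hs i hi) (v i)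

lemma mono {M N : ℕ} (h : M ≤ N) : polyMapDegreeLT K V M ≤ polyMapDegreeLT K V N := by
  rintro f ⟨v, hv⟩
  rw [funext hv]
  exact sum_pow_smul_mem id (fun i hi => (Finset.mem_range.1 hi).trans_le h) v

lemma affine_mem (u v : V) : (fun x : K => u + x • v) ∈ polyMapDegreeLT K V 2 :=
  ⟨fun i => if i = 0 then u else v, fun x => by simp [Finset.sum_range_succ]⟩

lemma quadratic_mem (u v w : V) :
    (fun x : K => u + x • v + x ^ 2 • w) ∈ polyMapDegreeLT K V 3 :=
  add_mem (mono (Nat.le_succ 2) (affine_mem u v)) (pow_smul_mem (Nat.lt_succ_self 2) w)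

lemma map_mem {W : Type*} [AddCommGroup W] [Module K W] {N : ℕ} {f : K → V}
    (hf : f ∈ polyMapDegreeLT K V N) (T : V →ₗ[K] W) :
    (fun x => T (f x)) ∈ polyMapDegreeLT K W N := by
  obtain ⟨v, hv⟩ := hf
  exact ⟨T ∘ v, fun x => by simp [hv]⟩

variable [Infinite K]

lemma eq_zero_of_pow_smul_mem {N : ℕ} {v : V}
    (h : (fun x : K => x ^ N • v) ∈ polyMapDegreeLT K V N) : v = 0 := by
  obtain ⟨w, hw⟩ := h
  rw [← Module.forall_dual_apply_eq_zero_iff K]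
  intro φ
  have hpoly : Polynomial.monomial N (φ v)
      = ∑ i ∈ Finset.range N, Polynomial.monomial i (φ (w i)) :=
    Polynomial.funext fun x => by
      simpa [Polynomial.eval_finsetSum, mul_comm] using congrArg φ (hw x)
  simpa [Polynomial.finsetSum_coeff, Polynomial.coeff_monomial] using
    congrArg (Polynomial.coeff · N) hpoly

lemma coeff_eq_zero {M N : ℕ} {v : ℕ → V}
    (h : (fun x : K => ∑ i ∈ Finset.range N, x ^ i • v i) ∈ polyMapDegreeLT K V M)
    {i : ℕ} (hM : M ≤ i) (hN : i < N) : v i = 0 := by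
  induction N with
  | zero => omega
  | succ N ih =>
    have htop : v N = 0 := by
      refine eq_zero_of_pow_smul_mem (K := K) (N := N) ?_
      convert sub_mem (mono (hM.trans (Nat.le_of_lt_succ hN)) h)
        (sum_pow_smul_mem id (fun i => Finset.mem_range.1) v) using 1
      ext x
      simp [Finset.sum_range_succ]
    rcases (Nat.le_of_lt_succ hN).eq_or_lt with rfl | hi
    · exact htop
    · exact ih (by simpa [Finset.sum_range_succ, htop] using h) hi

lemma mem_of_smul_mem {N : ℕ} {f : K → V} (hf : f ∈ polyMapDegreeLT K V (N + 1))
    (h : (fun x => x • f x) ∈ polyMapDegreeLT K V (N + 1)) : f ∈ polyMapDegreeLT K V N := by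
  obtain ⟨v, hv⟩ := hf
  have htop : v N = 0 := by
    refine eq_zero_of_pow_smul_mem (K := K) (N := N + 1) ?_
    convert sub_mem h (sum_pow_smul_mem (s := Finset.range N) (· + 1)
      (fun i hi => Nat.succ_lt_succ (Finset.mem_range.1 hi)) v) using 1
    ext x
    simp [hv, Finset.sum_range_succ, Finset.smul_sum, smul_smul, pow_succ']
  exact ⟨v, fun x => by simp [hv, Finset.sum_range_succ, htop]⟩

/-- Multiplication by `x` raises the degree and `T` does not. -/
lemma mem_of_smul_sub_apply_mem {M N : ℕ} {f : K → V} (hf : f ∈ polyMapDegreeLT K V N)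
    (T : V →ₗ[K] V) (h : (fun x => x • f x - T (f x)) ∈ polyMapDegreeLT K V (M + 1)) :
    f ∈ polyMapDegreeLT K V M := by
  induction N with
  | zero => exact mono M.zero_le hf
  | succ N ih =>
    rcases le_total M N with hMN | hNM
    · refine ih (mem_of_smul_mem hf ?_)
      convert add_mem (mono (Nat.succ_le_succ hMN) h) (map_mem hf T) using 1
      ext x
      simp
    · rcases hNM.eq_or_lt with rfl | hlt
      · refine ih (mem_of_smul_mem hf ?_)
        convert add_mem h (map_mem hf T) using 1
        ext x
        simp
      · exact mono hlt hf

lemma eq_zero_of_smul_eq_apply {N : ℕ} {f : K → V} (hf : f ∈ polyMapDegreeLT K V N)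
    (T : V →ₗ[K] V) (h : ∀ x, x • f x = T (f x)) : f = 0 := by
  obtain ⟨_, hv⟩ : f ∈ polyMapDegreeLT K V 0 :=
    mem_of_smul_sub_apply_mem hf T <| by
      have hzero : (fun x => x • f x - T (f x)) = 0 := funext fun x => sub_eq_zero.2 (h x)
      exact hzero ▸ zero_mem _
  exact funext fun x => by simp [hv]

end polyMapDegreeLT

lemma quadratic_coeffs_eq_zero [CharZero K] {c cx cm cxx cxm cmm : V}
    (h : ∀ x m : K, c + x • cx + m • cm + x ^ 2 • cxx + (x * m) • cxm + m ^ 2 • cmm = 0) :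
    c = 0 ∧ cx = 0 ∧ cm = 0 ∧ cxx = 0 ∧ cxm = 0 ∧ cmm = 0 := by
  have h0 := h 0 0
  have hx := h 1 0
  have hx' := h (-1) 0
  have hm := h 0 1
  have hm' := h 0 (-1)
  have hxm := h 1 1
  refine ⟨?_, ?_, ?_, ?_, ?_, ?_⟩
  · linear_combination (norm := module) h0
  · linear_combination (norm := module) (2⁻¹ : K) • (hx - hx')
  · linear_combination (norm := module) (2⁻¹ : K) • (hm - hm')
  · linear_combination (norm := module) (2⁻¹ : K) • (hx + hx') - h0
  · linear_combination (norm := module) hxm - hx - hm + h0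
  · linear_combination (norm := module) (2⁻¹ : K) • (hm + hm') - h0

end PolynomialMaps

section NovikovAlgebras

attribute [local instance] LieRing.ofAssociativeRing

section Ideals

variable {K V : Type*} [CommRing K] [AddCommGroup V] [Module K V] {circ : V →ₗ[K] V →ₗ[K] V}

/-- Two-sided ideals of the (non-associative) algebra `(V, circ)`. -/
def IsTwoSidedIdeal (circ : V →ₗ[K] V →ₗ[K] V) (I : Submodule K V) : Prop :=
  ∀ a ∈ I, ∀ b : V, circ a b ∈ I ∧ circ b a ∈ I

lemma commute_flip (hRight : ∀ a b c : V, circ (circ a b) c = circ (circ a c) b) (b c : V) :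
    Commute (circ.flip b) (circ.flip c) :=
  LinearMap.ext fun a => hRight a c b

lemma lie_flip_eq_sub (hLeft : ∀ a b c : V, circ (circ a b) c - circ a (circ b c)
      = circ (circ b a) c - circ b (circ a c)) (b c : V) :
    ⁅circ b, circ.flip c⁆ = circ.flip (circ b c) - circ.flip c * circ.flip b := by
  ext a
  simp only [Ring.lie_def, Module.End.mul_apply, LinearMap.sub_apply, LinearMap.flip_apply]
  linear_combination (norm := module) hLeft a b c

lemma isTwoSidedIdeal_maxGenEigenspace_flip
    (hLeft : ∀ a b c : V, circ (circ a b) c - circ a (circ b c)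
      = circ (circ b a) c - circ b (circ a c))
    (hRight : ∀ a b c : V, circ (circ a b) c = circ (circ a c) b) (c : V) (μ : K) :
    IsTwoSidedIdeal circ (Module.End.maxGenEigenspace (circ.flip c) μ) := by
  intro a ha b
  refine ⟨Module.End.mapsTo_maxGenEigenspace_of_comm (commute_flip hRight c b) μ ha, ?_⟩
  have hcomm : ⁅circ.flip c, ⁅circ.flip c, circ b⁆⁆ = 0 := by
    rw [← lie_skew (circ.flip c) (circ b), lie_flip_eq_sub hLeft, lie_neg, neg_eq_zero]
    exact ((commute_flip hRight _ _).sub_right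
      ((commute_flip hRight _ _).mul_right (commute_flip hRight _ _))).lie_eq
  have hb : circ b ∈
      (LieModule.toEnd K (Module.End K V) (Module.End K V) (circ.flip c)).maxGenEigenspace 0 :=
    Module.End.mem_maxGenEigenspace _ _ _ |>.2 ⟨2, by simpa [pow_two] using hcomm⟩
  simpa using LieModule.lie_mem_maxGenEigenspace_toEnd hb ha

lemma isTwoSidedIdeal_iInf_eigenspace_flip
    (hLeft : ∀ a b c : V, circ (circ a b) c - circ a (circ b c)
      = circ (circ b a) c - circ b (circ a c))
    {χ : V → K} (hχ : ∀ b c, χ (circ b c) = χ b * χ c) :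
    IsTwoSidedIdeal circ (⨅ c, Module.End.eigenspace (circ.flip c) (χ c)) := by
  intro a ha b
  simp only [Submodule.mem_iInf, Module.End.mem_eigenspace_iff, LinearMap.flip_apply] at ha ⊢
  constructor
  · intro c
    rw [ha b, map_smul, LinearMap.smul_apply, ha c, smul_comm]
  · intro c
    have h := hLeft a b c
    simp only [ha, map_smul, LinearMap.smul_apply, hχ] at h
    linear_combination (norm := module) -h

end Ideals

section Weights

variable {K V : Type*} [Field K] [AddCommGroup V] [Module K V] {circ : V →ₗ[K] V →ₗ[K] V}

lemma exists_common_eigenvector_flip [IsAlgClosed K] [FiniteDimensional K V] [Nontrivial V]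
    (hRight : ∀ a b c : V, circ (circ a b) c = circ (circ a c) b) :
    ∃ χ : V → K, ∃ v : V, v ≠ 0 ∧ ∀ c, circ v c = χ c • v := by
  let L := LieSubalgebra.lieSpan K (Module.End K V) (Set.range circ.flip)
  have : IsLieAbelian L := LieSubalgebra.isLieAbelian_lieSpan_iff.2 <| by
    rintro _ ⟨b, rfl⟩ _ ⟨c, rfl⟩
    exact (commute_flip hRight b c).lie_eq
  obtain ⟨χ, hχ⟩ := LieModule.exists_nontrivial_weightSpace_of_isNilpotent K L V
  obtain ⟨⟨v, hv⟩, hv0⟩ := exists_ne (0 : LieModule.weightSpace V χ)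
  rw [LieModule.mem_weightSpace] at hv
  exact ⟨fun c => χ ⟨circ.flip c, LieSubalgebra.subset_lieSpan ⟨c, rfl⟩⟩, v,
    fun h => hv0 (Subtype.ext h), fun c => hv ⟨circ.flip c, _⟩⟩

lemma weight_mul_of_isNilpotent [CharZero K] [FiniteDimensional K V] [Nontrivial V]
    (hLeft : ∀ a b c : V, circ (circ a b) c - circ a (circ b c)
      = circ (circ b a) c - circ b (circ a c))
    (hRight : ∀ a b c : V, circ (circ a b) c = circ (circ a c) b) {χ : V → K}
    (hχ : ∀ c, IsNilpotent (circ.flip c - algebraMap K (Module.End K V) (χ c))) (b c : V) :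
    χ (circ b c) = χ b * χ c := by
  have hmul : ∀ (f : Module.End K V) (c : V), Commute f (circ.flip c) →
      LinearMap.trace K V (f * circ.flip c) = χ c * LinearMap.trace K V f := fun f c hf =>
    LinearMap.trace_comp_eq_mul_of_commute_of_isNilpotent _ hf (hχ c)
  have htrace : ∀ c, LinearMap.trace K V (circ.flip c) = χ c * Module.finrank K V := fun c => by
    simpa using hmul 1 c (Commute.one_left _)
  have hlie := congrArg (LinearMap.trace K V) (lie_flip_eq_sub hLeft b c)
  rw [LinearMap.trace_lie, map_sub, hmul _ _ (commute_flip hRight c b), htrace, htrace] at hlie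
  have hdim : (Module.finrank K V : K) ≠ 0 := Nat.cast_ne_zero.2 Module.finrank_pos.ne'
  exact mul_right_cancel₀ hdim (by linear_combination -hlie)

theorem exists_weight_of_simple [IsAlgClosed K] [CharZero K] [FiniteDimensional K V]
    [Nontrivial V]
    (hLeft : ∀ a b c : V, circ (circ a b) c - circ a (circ b c)
      = circ (circ b a) c - circ b (circ a c))
    (hRight : ∀ a b c : V, circ (circ a b) c = circ (circ a c) b)
    (hsimple : ∀ I : Submodule K V, IsTwoSidedIdeal circ I → I = ⊥ ∨ I = ⊤) :
    ∃ χ : V → K, ∀ b c, circ b c = χ c • b := by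
  obtain ⟨χ, v, hv0, hv⟩ := exists_common_eigenvector_flip hRight
  have eq_top : ∀ I : Submodule K V, IsTwoSidedIdeal circ I → v ∈ I → I = ⊤ := fun I hI hvI =>
    (hsimple I hI).resolve_left fun h => hv0 (by simpa [h] using hvI)
  have hnil : ∀ c, IsNilpotent (circ.flip c - algebraMap K (Module.End K V) (χ c)) := fun c => by
    have htop := eq_top _ (isTwoSidedIdeal_maxGenEigenspace_flip hLeft hRight c (χ c))
      (Module.End.eigenspace_le_maxGenEigenspace (Module.End.mem_eigenspace_iff.2 (hv c)))
    exact Module.End.isNilpotent_iff_of_finite.2 fun w =>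
      (Module.End.mem_maxGenEigenspace _ _ _).1 (htop ▸ Submodule.mem_top)
  have hmul := weight_mul_of_isNilpotent hLeft hRight hnil
  have htop := eq_top _ (isTwoSidedIdeal_iInf_eigenspace_flip hLeft hmul)
    (by simpa [Submodule.mem_iInf, Module.End.mem_eigenspace_iff] using hv)
  refine ⟨χ, fun b c => ?_⟩
  have hb := htop ▸ Submodule.mem_top (x := b)
  exact Module.End.mem_eigenspace_iff.1 ((Submodule.mem_iInf _).1 hb c)

end Weights

end NovikovAlgebras

section ConformalDerivations

open polyMapDegreeLT

variable {V : Type*} [AddCommGroup V] [Module ℂ V] {circ br : V →ₗ[ℂ] V →ₗ[ℂ] V}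
  {n : ℕ} {d : ℕ → V →ₗ[ℂ] (ℂ → V)}

/-- The map `a ↦ ∑ i ≤ n, ∂ ^ i d^i_λ(a)` attached to the family `d`, at `λ = l` and with the
formal variable `∂` evaluated at `x`. -/
def generatingMap (n : ℕ) (d : ℕ → V →ₗ[ℂ] (ℂ → V)) (l x : ℂ) : V →ₗ[ℂ] V :=
  ∑ i ∈ Finset.range (n + 1), x ^ i • (LinearMap.proj l ∘ₗ d i)

lemma generatingMap_apply (l x : ℂ) (a : V) :
    generatingMap n d l x a = ∑ i ∈ Finset.range (n + 1), x ^ i • d i a l := by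
  simp [generatingMap]

lemma generatingMap_eq_add_smul (hd : ∀ i, n < i → d i = 0) {a : V}
    (ha : ∀ i, 2 ≤ i → i ≤ n → d i a = 0) (l x : ℂ) :
    generatingMap n d l x a = d 0 a l + x • d 1 a l := by
  have hn : ∀ i ≥ n + 1, x ^ i • d i a l = 0 := fun i hi => by simp [hd i hi]
  have h2 : ∀ i ≥ 2, x ^ i • d i a l = 0 := fun i hi => by
    rcases le_or_gt i n with hin | hin
    · simp [ha i hi hin]
    · exact hn i hin
  rw [generatingMap_apply, ← Finset.eventually_constant_sum hn (Nat.le_succ (n + 1)),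
    Finset.eventually_constant_sum h2 (Nat.le_add_left 2 n)]
  simp [Finset.sum_range_succ]

namespace ConfDerEq

lemma generatingMap_eq (hE : ConfDerEq circ br n d) (a b : V) (l m x : ℂ) :
    (x + l) • generatingMap n d l x (circ b a)
      + m • generatingMap n d l x (circ a b + circ b a) + generatingMap n d l x (br b a)
    = (x • circ b (generatingMap n d l (-l - m) a)
        + (l + m) • (circ (generatingMap n d l (-l - m) a) b
          + circ b (generatingMap n d l (-l - m) a)) + br b (generatingMap n d l (-l - m) a))
      + (x • circ (generatingMap n d l (m + x) b) a
        + m • (circ (generatingMap n d l (m + x) b) a + circ a (generatingMap n d l (m + x) b))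
        + br (generatingMap n d l (m + x) b) a) := by
  have map_generatingMap : ∀ (F : V →ₗ[ℂ] V) (y : ℂ) (c : V), F (generatingMap n d l y c)
      = ∑ i ∈ Finset.range (n + 1), y ^ i • F (d i c l) := fun F y c => by
    simp [generatingMap_apply]
  have ha := map_generatingMap (x • circ b + (l + m) • (circ.flip b + circ b) + br b) (-l - m) a
  have hb := map_generatingMap (x • circ.flip a + m • (circ.flip a + circ a) + br.flip a) (m + x) b
  simp only [LinearMap.add_apply, LinearMap.smul_apply, LinearMap.flip_apply] at ha hb
  rw [ha, hb]
  simpa only [generatingMap_apply] using hE a b l m x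

variable {e : V} {k : ℂ}

/-- For `a = e` and `μ = 0` the terms `k x D_x(b)` of (E) cancel and what involves `D_x(e)` is
affine in `x`, so the coefficients of `x ^ i` with `2 ≤ i` can be compared. -/
lemma smul_apply_eq (hE : ConfDerEq circ br n d) (he : ∀ b, circ b e = k • b) {i : ℕ}
    (hi : 2 ≤ i) (hin : i ≤ n) (b : V) (l : ℂ) :
    (l * k) • d i b l = br (d i b l) e - d i (br b e) l := by
  set E := generatingMap n d l (-l) e
  have hmem : (fun x : ℂ => ∑ i ∈ Finset.range (n + 1),
      x ^ i • ((l * k) • d i b l - (br (d i b l) e - d i (br b e) l)))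
      ∈ polyMapDegreeLT ℂ V 2 := by
    convert affine_mem (l • (circ E b + circ b E) + br b E) (circ b E) using 1
    ext x
    have h := hE.generatingMap_eq e b l 0 x
    simp only [he, sub_zero, zero_smul, add_zero, zero_add, map_smul] at h
    have hsum : ∑ i ∈ Finset.range (n + 1),
        x ^ i • ((l * k) • d i b l - (br (d i b l) e - d i (br b e) l))
        = (l * k) • generatingMap n d l x b - (br (generatingMap n d l x b) e
          - generatingMap n d l x (br b e)) := by
      simp [generatingMap_apply, smul_sub, Finset.smul_sum, smul_comm (l * k)]
    linear_combination (norm := module) hsum + h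
  exact sub_eq_zero.1 (coeff_eq_zero hmem hi (Nat.lt_succ_of_le hin))

lemma apply_eq_zero (hE : ConfDerEq circ br n d) (hk : k ≠ 0) (he : ∀ b, circ b e = k • b)
    (hee : br e e = 0) {i N : ℕ} (hi : 2 ≤ i) (hin : i ≤ n)
    (hpoly : d i e ∈ polyMapDegreeLT ℂ V N) : d i e = 0 :=
  eq_zero_of_smul_eq_apply hpoly (k⁻¹ • br.flip e) fun l => by
    have h := hE.smul_apply_eq he hi hin e l
    simp only [hee, map_zero, Pi.zero_apply, sub_zero] at h
    simp [← h, smul_smul, mul_comm l, hk]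

/-- For `b = e`, the difference of the equations (E) with `μ = 1` and `μ = 0` gives
`D_x(e∘a) = -k D_x(a)` up to affine terms; substitute this in the equation with `μ = 0`. -/
lemma exists_smul_generatingMap_eq (hE : ConfDerEq circ br n d) (he : ∀ b, circ b e = k • b)
    {l : ℂ} {p q : V} (hpq : ∀ x, generatingMap n d l x e = p + x • q) (a : V) :
    ∃ u v w : V, ∀ x : ℂ, (k * x) • generatingMap n d l x a =
      -(k * l) • generatingMap n d l x a + generatingMap n d l x (br e a)
        + (u + x • v + x ^ 2 • w) := by
  set A₀ := generatingMap n d l (-l) a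
  set A₁ := generatingMap n d l (-l - 1) a
  obtain ⟨u, v, huv⟩ : ∃ u v : V, ∀ x : ℂ,
      generatingMap n d l x (circ e a) = -k • generatingMap n d l x a + u + x • v := by
    refine ⟨(l + 1) • (k • A₁ + circ e A₁) + br e A₁ - l • (k • A₀ + circ e A₀) - br e A₀
      + circ p a + circ a p + circ q a + circ a q + br q a,
      circ e A₁ - circ e A₀ + (2 : ℂ) • circ q a + circ a q, fun x => ?_⟩
    have h₀ := hE.generatingMap_eq a e l 0 x
    have h₁ := hE.generatingMap_eq a e l 1 x
    simp only [he, hpq, sub_zero, map_add, map_smul, LinearMap.add_apply,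
      LinearMap.smul_apply] at h₀ h₁
    linear_combination (norm := module) h₁ - h₀
  refine ⟨l • u - l • (k • A₀ + circ e A₀) - br e A₀ - br p a,
    u + l • v - circ e A₀ - circ p a - br q a, v - circ q a, fun x => ?_⟩
  have h₀ := hE.generatingMap_eq a e l 0 x
  simp only [he, hpq, huv, sub_zero, map_add, map_smul, LinearMap.add_apply,
    LinearMap.smul_apply] at h₀
  linear_combination (norm := module) -h₀

lemma eq_zero_of_one_lt (hE : ConfDerEq circ br n d) (hk : k ≠ 0) (he : ∀ b, circ b e = k • b)
    (hd : ∀ i, n < i → d i = 0) (hde : ∀ i, 2 ≤ i → i ≤ n → d i e = 0) {i : ℕ} (hi : 1 < i) :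
    d i = 0 := by
  rcases lt_or_ge n i with hin | hin
  · exact hd i hin
  ext b l
  choose u v w huvw using
    hE.exists_smul_generatingMap_eq he fun x => generatingMap_eq_add_smul hd hde l x
  let f : ℂ → V → V := fun x a => generatingMap n d l x a
  have hf : f = fun x => ∑ i ∈ Finset.range (n + 1), x ^ i • fun a => d i a l := by
    ext x a
    simp [f, generatingMap_apply]
  have hf_mem : f ∈ polyMapDegreeLT ℂ (V → V) (n + 1) := ⟨_, congrFun hf⟩
  have hf_mem_two : f ∈ polyMapDegreeLT ℂ (V → V) 2 := by
    refine mem_of_smul_sub_apply_mem hf_mem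
      (-l • LinearMap.id + k⁻¹ • LinearMap.funLeft ℂ V (br e)) ?_
    convert quadratic_mem (k⁻¹ • u) (k⁻¹ • v) (k⁻¹ • w) using 1
    ext x a
    have h := congrArg (k⁻¹ • ·) (huvw a x)
    simp only [smul_add, smul_smul, mul_neg, inv_mul_cancel_left₀ hk] at h
    change x • generatingMap n d l x a
        - (-l • generatingMap n d l x a + k⁻¹ • generatingMap n d l x (br e a))
      = k⁻¹ • u a + x • k⁻¹ • v a + x ^ 2 • k⁻¹ • w a
    linear_combination (norm := module) h
  rw [hf] at hf_mem_two
  have hcoeff := coeff_eq_zero hf_mem_two hi (Nat.lt_succ_of_le hin)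
  exact congrFun hcoeff b

lemma coeffs_eq_zero (hE : ConfDerEq circ br n d) (hd : ∀ i, n < i → d i = 0)
    (hd' : ∀ i, 1 < i → d i = 0) (a b : V) (l : ℂ) :
    l • d 0 (circ b a) l + d 0 (br b a) l - l • (circ (d 0 a l) b + circ b (d 0 a l))
      + l ^ 2 • (circ (d 1 a l) b + circ b (d 1 a l)) - br b (d 0 a l) + l • br b (d 1 a l)
      - br (d 0 b l) a = 0
    ∧ d 0 (circ b a) l + l • d 1 (circ b a) l + d 1 (br b a) l - circ b (d 0 a l)
      + l • circ b (d 1 a l) - circ (d 0 b l) a - br (d 1 b l) a = 0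
    ∧ d 0 (circ a b) l + d 0 (circ b a) l - (circ (d 0 a l) b + circ b (d 0 a l))
      + (2 * l) • (circ (d 1 a l) b + circ b (d 1 a l)) + br b (d 1 a l)
      - (circ (d 0 b l) a + circ a (d 0 b l)) - br (d 1 b l) a = 0
    ∧ d 1 (circ b a) l - circ (d 1 b l) a = 0
    ∧ d 1 (circ a b) l + d 1 (circ b a) l + circ b (d 1 a l) - (2 : ℂ) • circ (d 1 b l) a
      - circ a (d 1 b l) = 0
    ∧ circ (d 1 a l) b + circ b (d 1 a l) - circ (d 1 b l) a - circ a (d 1 b l) = 0 :=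
  quadratic_coeffs_eq_zero (K := ℂ) fun x m => by
    have hD : ∀ x c, generatingMap n d l x c = d 0 c l + x • d 1 c l := fun x c =>
      generatingMap_eq_add_smul hd (a := c) (fun i hi _ => by simp [hd' i hi]) l x
    have h := hE.generatingMap_eq a b l m x
    simp only [hD, map_add, map_smul, LinearMap.add_apply, LinearMap.smul_apply,
      Pi.add_apply] at h
    linear_combination (norm := module) h

lemma dIdentities (hE : ConfDerEq circ br n d) (hd : ∀ i, n < i → d i = 0)
    (hd' : ∀ i, 1 < i → d i = 0) : DIdentities circ br d := by
  intro a b l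
  have sum_Icc_one : ∀ f : ℕ → V, ∑ i ∈ Finset.Icc 1 3, f i = f 1 + f 2 + f 3 := fun f => by
    simp [Finset.sum_Icc_succ_top]
  have sum_Icc_two : ∀ f : ℕ → V, ∑ i ∈ Finset.Icc 2 3, f i = f 2 + f 3 := fun f => by
    simp [Finset.sum_Icc_succ_top]
  obtain ⟨h, hx, hm, hxx, hxm, hmm⟩ := hE.coeffs_eq_zero hd hd' a b l
  simp only [hd' 2 (by simp), hd' 3 (by simp), LinearMap.zero_apply, Pi.zero_apply, map_zero,
    map_add, Pi.add_apply, smul_zero, add_zero, zero_add, sub_self, and_self, true_and,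
    Finset.sum_range_succ, Finset.sum_range_zero, sum_Icc_one, sum_Icc_two, pow_zero, pow_one,
    Nat.sub_self, Nat.choose_self, Nat.reduceAdd, Nat.cast_zero, Nat.cast_one]
  refine ⟨?_, ?_, ?_, ?_, ?_, ?_⟩
  · linear_combination (norm := module) hxx
  · linear_combination (norm := module) hxm
  · linear_combination (norm := module) -hmm
  · linear_combination (norm := module) hx
  · linear_combination (norm := module) hm
  · linear_combination (norm := module) h

end ConfDerEq

end ConformalDerivations

theorem NovikovSimple.exists_right_mul_eq_smul {V : Type*} [AddCommGroup V] [Module ℂ V]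
    [FiniteDimensional ℂ V] {circ : V →ₗ[ℂ] V →ₗ[ℂ] V} (hsimple : NovikovSimple circ)
    (hLeft : ∀ a b c : V, circ (circ a b) c - circ a (circ b c)
      = circ (circ b a) c - circ b (circ a c))
    (hRight : ∀ a b c : V, circ (circ a b) c = circ (circ a c) b) :
    ∃ (e : V) (k : ℂ), k ≠ 0 ∧ ∀ b, circ b e = k • b := by
  obtain ⟨⟨a, e, hae⟩, hideal⟩ := hsimple
  have : Nontrivial V := ⟨_, _, hae⟩
  obtain ⟨χ, hχ⟩ := exists_weight_of_simple hLeft hRight hideal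
  refine ⟨e, χ e, fun h => hae ?_, fun b => hχ b e⟩
  rw [hχ, h, zero_smul]

theorem stmt_11_general {V : Type*} [AddCommGroup V] [Module ℂ V]
    (circ br : V →ₗ[ℂ] V →ₗ[ℂ] V) (e : V) (k : ℂ) (hk : k ≠ 0) (he : ∀ b : V, circ b e = k • b)
    (hee : br e e = 0) (n : ℕ) (d : ℕ → V →ₗ[ℂ] (ℂ → V)) (hd : ∀ i : ℕ, n < i → d i = 0)
    (hpoly : ∀ (i : ℕ) (a : V), ∃ (N : ℕ) (v : ℕ → V),
      ∀ t : ℂ, d i a t = ∑ j ∈ Finset.range N, t ^ j • v j)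
    (hE : ConfDerEq circ br n d) :
    (∀ i : ℕ, 1 < i → d i = 0) ∧ DIdentities circ br d := by
  have hde : ∀ i, 2 ≤ i → i ≤ n → d i e = 0 := fun i hi hin =>
    have ⟨_, hN⟩ := hpoly i e
    hE.apply_eq_zero hk he hee hi hin hN
  have hd' : ∀ i, 1 < i → d i = 0 := fun i hi => hE.eq_zero_of_one_lt hk he hd hde hi
  exact ⟨hd', hE.dIdentities hd hd'⟩

/-- Let `V` be a finite-dimensional Gel'fand–Dorfman bialgebra over
`ℂ` such that either `(V,∘)` is a simple Novikov algebra, or there exist `x ∈ V` and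
`k ≠ 0` with `b∘x = k·b` for all `b`.  If `d^0, …, d^n` are linear maps from `V` into
the space of polynomial maps `ℂ → V` satisfying the conformal derivation equation (E),
then `d^i = 0` for all `i > 3` and `d^0, d^1, d^2, d^3` satisfy (D1)–(D13). -/
theorem stmt_11 {V : Type*} [AddCommGroup V] [Module ℂ V] [FiniteDimensional ℂ V]
    (circ br : V →ₗ[ℂ] V →ₗ[ℂ] V)
    -- Novikov algebra axioms for `∘ = circ`
    (hNov1 : ∀ a b c : V, circ (circ a b) c - circ a (circ b c)
      = circ (circ b a) c - circ b (circ a c))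
    (hNov2 : ∀ a b c : V, circ (circ a b) c = circ (circ a c) b)
    -- Lie algebra axioms for `[·,·] = br`
    (hSkew : ∀ a b : V, br a b = - br b a)
    (hJacobi : ∀ a b c : V, br (br a b) c + br (br b c) a + br (br c a) b = 0)
    -- compatibility condition of the Gel'fand–Dorfman bialgebra
    (hCompat : ∀ a b c : V, br (circ a b) c - br (circ a c) b + circ (br a b) c
      - circ (br a c) b - circ a (br b c) = 0)
    -- `(V,∘)` is simple, or has an element `x` with `b∘x = k·b` for all `b`
    (hcase : NovikovSimple circ
      ∨ ∃ (x : V) (k : ℂ), k ≠ 0 ∧ ∀ b : V, circ b x = k • b)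
    (n : ℕ) (d : ℕ → V →ₗ[ℂ] (ℂ → V))
    -- the family consists only of `d^0, …, d^n` (so `d^i = 0` for `i > n`)
    (hd : ∀ i : ℕ, n < i → d i = 0)
    -- each `d^i(a)` is a polynomial map `ℂ → V`
    (hpoly : ∀ (i : ℕ) (a : V), ∃ (N : ℕ) (v : ℕ → V),
      ∀ t : ℂ, d i a t = ∑ j ∈ Finset.range N, t ^ j • v j)
    (hE : ConfDerEq circ br n d) :
    (∀ i : ℕ, 3 < i → d i = 0) ∧ DIdentities circ br d := by
  obtain ⟨e, k, hk, he⟩ := hcase.elim (·.exists_right_mul_eq_smul hNov1 hNov2) id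
  have hee : br e e = 0 := by linear_combination (norm := module) (2⁻¹ : ℂ) • hSkew e e
  exact (stmt_11_general circ br e k hk he hee n d hd hpoly hE).imp_left
    fun h i hi => h i (by lia)
end

section
/- Let (V,∘) be a Novikov algebra over ℂ (possibly infinite-dimensional, with trivial Lie bracket) such that either (V,∘) is simple, or there exists x ∈ V and k ∈ ℂ∖{0} with b∘x = k·b for all b ∈ V. Let (d^i)_{i∈ℕ} be a family of linear maps from V into the space of polynomial maps ℂ → V such that for each a ∈ V one has d^i_λ(a) = 0 for all but finitely many i, and suppose the family satisfies the Novikov conformal derivation equation (E₀). Then d^i = 0 for all i > 3, and d^0, d^1, d^2, d^3 satisfy identities (D1)–(D13) with the Lie bracket taken to be zero, for all a, b ∈ V and λ ∈ ℂ. -/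
/-- The Novikov conformal derivation equation (E₀) for a pointwise finitely supported
family `(d^i)_{i∈ℕ}` of linear maps from `V` into maps `ℂ → V`, on the quadratic Lie
conformal algebra of the Novikov algebra `(V, circ)` (with trivial Lie bracket);
the formal variable `∂` is evaluated at `x : ℂ`. -/
def ConfDerEqNov {V : Type*} [AddCommGroup V] [Module ℂ V]
    (circ : V →ₗ[ℂ] V →ₗ[ℂ] V) (d : ℕ → V →ₗ[ℂ] (ℂ → V)) : Prop :=
  ∀ (a b : V) (l m x : ℂ),
    (x + l) • (∑ᶠ i : ℕ, x ^ i • d i (circ b a) l)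
      + m • (∑ᶠ i : ℕ, x ^ i • d i (circ a b + circ b a) l)
    = (∑ᶠ i : ℕ, (-l - m) ^ i •
        (x • circ b (d i a l) + (l + m) • (circ (d i a l) b + circ b (d i a l))))
      + (∑ᶠ i : ℕ, (m + x) ^ i •
        (x • circ (d i b l) a + m • (circ (d i b l) a + circ a (d i b l))))

/-! For fixed `λ`, (E₀) is an identity between polynomials in `x` and `μ` with coefficients in `V`.
For `i ≥ 4` the coefficients of `x ^ (i - 1) μ ^ 2` and `x ^ 2 μ ^ (i - 1)` form a linear system in
`d^i(b) ∘ a` and `d^i(b) ∗ a` with determinant `(i choose 2) ^ 2 - i ^ 2 ≠ 0`, so `d^i(b)`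
annihilates `V` on both sides and vanishes. The remaining coefficients are (D1)–(D13), except that
(D9) comes out only up to multiples of `λ d^2` and `λ d^3`. These vanish: if `b ∘ e = k b` for all
`b`, the coefficient of `x ^ (i + 1)` reads `k d^i(b) + λ k d^(i + 1)(b) = k d^i(b)`; if `V` is
simple, `D = d^3` and then `D = d^2` satisfy `D(a ∘ b) = D(a) ∘ b` and
`D(a ∘ b) = a ∘ D(b) + i D(b ∘ a)`, which force `D(D(a ∘ b)) = 0`, and `D = 0` because `ker D` is
an ideal. -/

theorem finsum_eq_sum_range_of_forall_le {M : Type*} [AddCommMonoid M] {g : ℕ → M} {n : ℕ}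
    (h : ∀ i, n ≤ i → g i = 0) : ∑ᶠ i, g i = ∑ i ∈ Finset.range n, g i :=
  finsum_eq_sum_of_support_subset _ fun i hi => by
    simpa using not_le.mp (mt (h i) hi)

theorem eq_zero_of_smul_add_smul {K V : Type*} [Field K] [AddCommGroup V] [Module K V]
    {r s : K} {u w : V} (hrs : r ^ 2 ≠ s ^ 2) (hu : r • u + s • w = 0) (hw : s • u + r • w = 0) :
    u = 0 ∧ w = 0 := by
  have hdet : r ^ 2 - s ^ 2 ≠ 0 := sub_ne_zero.mpr hrs
  constructor
  · refine (smul_eq_zero.mp ?_).resolve_left hdet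
    linear_combination (norm := module) r • hu - s • hw
  · refine (smul_eq_zero.mp ?_).resolve_left hdet
    linear_combination (norm := module) r • hw - s • hu

theorem lt_choose_two {n : ℕ} (hn : 3 < n) : n < n.choose 2 := by
  induction n, hn using Nat.le_induction with
  | base => decide
  | succ n hn ih =>
    rw [Nat.choose_succ_succ', Nat.choose_one_right]
    lia

section PolynomialModule

open Polynomial

variable {K V : Type*} [CommRing K] [AddCommGroup V] [Module K V]

theorem polynomialModule_eval_eq_finsum (x : K) (f : PolynomialModule K V) :
    PolynomialModule.eval x f = ∑ᶠ i, x ^ i • f.coeff i :=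
  (finsum_eq_sum_of_support_subset _ fun i => by contrapose; simp_all).symm

theorem polynomialModule_coeff_map (L : V →ₗ[K] V) (f : PolynomialModule K V) (i : ℕ) :
    (PolynomialModule.map K L f).coeff i = L (f.coeff i) :=
  rfl

theorem coeff_X_add_C_smul (l : K) (f : PolynomialModule K V) (i : ℕ) :
    ((X + C l) • f).coeff i = (if i = 0 then 0 else f.coeff (i - 1)) + l • f.coeff i := by
  rw [← monomial_one_one_eq_X, ← monomial_zero_left, add_smul]
  rcases i with _ | i <;> simp [PolynomialModule.monomial_smul_apply, -monomial_zero_left]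

theorem coeff_X_add_C_pow_smul_comp (l : K) (f : PolynomialModule K V) (k j : ℕ) :
    ((X + C l) ^ k • PolynomialModule.comp (-(X + C l)) f).coeff j =
      ∑ᶠ i, ((-1) ^ i * (i + k).choose j * l ^ (i + k - j)) • f.coeff i := by
  suffices ((X + C l) ^ k • PolynomialModule.comp (-(X + C l)) f).coeff j =
      f.coeff.sum fun i v => ((-1) ^ i * (i + k).choose j * l ^ (i + k - j)) • v by
    rw [this]
    exact (finsum_eq_sum_of_support_subset _ fun i => by contrapose; simp_all).symm
  induction f using PolynomialModule.induction_linear with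
  | zero => simp
  | add f g hf hg =>
    rw [map_add, smul_add, PolynomialModule.coeff_add, Finsupp.add_apply, hf, hg,
      PolynomialModule.coeff_add, Finsupp.sum_add_index' (by simp) (by simp [smul_add])]
  | single i v =>
    have factor_sign : (X + C l) ^ k * (-(X + C l)) ^ i = C ((-1) ^ i) * (X + C l) ^ (i + k) := by
      rw [neg_pow, pow_add, C_pow, C_neg, C_1]
      ring
    rw [PolynomialModule.comp_single, smul_smul, PolynomialModule.smul_single_apply, factor_sign,
      coeff_C_mul, tsub_zero, coeff_X_add_C_pow, if_pos j.zero_le, PolynomialModule.coeff_single,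
      Finsupp.sum_single_index (by simp), mul_comm (l ^ _), ← mul_assoc]

/-- The scalar polynomial obtained by applying the functional `φ` to each coefficient of `f`;
identities in `V[X]` are reduced to identities in `K[X]` by letting `φ` vary. -/
noncomputable def dualPolynomial (φ : Module.Dual K V) (f : PolynomialModule K V) : K[X] :=
  PolynomialModule.equivPolynomial (PolynomialModule.map K φ f)

theorem coeff_dualPolynomial (φ : Module.Dual K V) (f : PolynomialModule K V) (i : ℕ) :
    (dualPolynomial φ f).coeff i = φ (f.coeff i) :=
  rfl

theorem eval_dualPolynomial (φ : Module.Dual K V) (f : PolynomialModule K V) (x : K) :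
    (dualPolynomial φ f).eval x = φ (PolynomialModule.eval x f) := by
  unfold dualPolynomial
  induction f using PolynomialModule.induction_linear with
  | zero => simp
  | add f g hf hg => simp [hf, hg]
  | single i v => simp [mul_comm]

end PolynomialModule

section FunctionalEquation

open Polynomial

variable {K V : Type*} [CommRing K] [IsDomain K] [Infinite K]

theorem coeff_eq_of_forall_polynomial_eval_eq {B S p q R T : K[X]}
    (h : ∀ m x : K, B.eval x + m * S.eval x =
      x * p.eval m + q.eval m + x * R.eval (m + x) + m * T.eval (m + x)) (i j : ℕ) :
    (if j = 0 then B.coeff i else 0) + (if j = 1 then S.coeff i else 0) =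
      (if i = 1 then p.coeff j else 0) + (if i = 0 then q.coeff j else 0)
        + (if i = 0 then 0 else (i - 1 + j).choose j * R.coeff (i - 1 + j))
        + (if j = 0 then 0 else (i + (j - 1)).choose (j - 1) * T.coeff (i + (j - 1))) := by
  have eq_in_m (x : K) : C (B.eval x) + C (S.eval x) * X =
      C x * p + q + C x * taylor x R + X * taylor x T :=
    Polynomial.funext fun m => by simpa [taylor_eval, mul_comm (S.eval x)] using h m x
  have eq_in_x : (if j = 0 then B else 0) + (if j = 1 then S else 0) =
      C (p.coeff j) * X + C (q.coeff j) + X * hasseDeriv j R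
        + (if j = 0 then 0 else hasseDeriv (j - 1) T) := by
    refine Polynomial.funext fun x => ?_
    have := congr(coeff $(eq_in_m x) j)
    rcases j with _ | _ | j <;> simpa [taylor_coeff, coeff_C, mul_comm _ x] using this
  have := congr(coeff $eq_in_x i)
  rcases i with _ | _ | i <;> rcases j with _ | _ | j <;>
    simpa [hasseDeriv_coeff, coeff_C, coeff_X, -hasseDeriv_one] using this

variable [AddCommGroup V] [Module K V] [Module.Projective K V]

theorem coeff_eq_of_forall_polynomialModule_eval_eq {B S p q R T : PolynomialModule K V}
    (h : ∀ m x : K, B.eval x + m • S.eval x =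
      x • p.eval m + q.eval m + x • R.eval (m + x) + m • T.eval (m + x)) (i j : ℕ) :
    (if j = 0 then B.coeff i else 0) + (if j = 1 then S.coeff i else 0) =
      (if i = 1 then p.coeff j else 0) + (if i = 0 then q.coeff j else 0)
        + (if i = 0 then 0 else (i - 1 + j).choose j • R.coeff (i - 1 + j))
        + (if j = 0 then 0 else (i + (j - 1)).choose (j - 1) • T.coeff (i + (j - 1))) := by
  rw [← sub_eq_zero, ← Module.forall_dual_apply_eq_zero_iff K]
  intro φ
  have := coeff_eq_of_forall_polynomial_eval_eq (B := dualPolynomial φ B) (S := dualPolynomial φ S)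
    (p := dualPolynomial φ p) (q := dualPolynomial φ q) (R := dualPolynomial φ R)
    (T := dualPolynomial φ T) (fun m x => by
      simpa only [eval_dualPolynomial, map_add, map_smul, smul_eq_mul] using congr(φ $(h m x))) i j
  rw [map_sub, sub_eq_zero]
  simpa only [coeff_dualPolynomial, map_add, apply_ite φ, map_zero, map_nsmul, nsmul_eq_mul]
    using this

end FunctionalEquation

-- Expanding `D (a ∘ D b)` and `D (D a ∘ b)` computes `D a ∘ D b` in two ways.
theorem sq_smul_apply_apply_circ_eq_zero {K V : Type*} [CommRing K] [AddCommGroup V] [Module K V]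
    {circ : V →ₗ[K] V →ₗ[K] V} {D : V →ₗ[K] V} {c : K}
    (hright : ∀ a b, D (circ a b) = circ (D a) b)
    (hleft : ∀ a b, D (circ a b) = circ a (D b) + c • D (circ b a)) (a b : V) :
    c ^ 2 • D (D (circ a b)) = 0 := by
  have inner_right : circ (D a) (D b) = D (D (circ a b)) - c • D (D (circ b a)) := by
    rw [← hright, eq_sub_of_add_eq (hleft a b).symm, map_sub, map_smul]
  have inner_left : circ (D a) (D b) =
      D (D (circ a b)) - c • (D (D (circ b a)) - c • D (D (circ a b))) := by
    rw [eq_sub_of_add_eq (hleft (D a) b).symm, ← hright, eq_sub_of_add_eq (hleft b a).symm,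
      map_sub, map_smul]
  linear_combination (norm := module) inner_right - inner_left

section NovikovAlgebra

variable {V : Type*} [AddCommGroup V] [Module ℂ V] {circ : V →ₗ[ℂ] V →ₗ[ℂ] V}

theorem eq_zero_of_circ_eq_zero
    (hcase : NovikovSimple circ ∨ ∃ (x : V) (k : ℂ), k ≠ 0 ∧ ∀ b : V, circ b x = k • b)
    {v : V} (hleft : ∀ a, circ v a = 0) (hright : ∀ a, circ a v = 0) : v = 0 := by
  rcases hcase with ⟨⟨a, b, hab⟩, hideal⟩ | ⟨x, k, hk, hx⟩
  · have hv : v ∈ LinearMap.ker circ ⊓ LinearMap.ker circ.flip :=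
      ⟨LinearMap.ext hleft, LinearMap.ext hright⟩
    rcases hideal (LinearMap.ker circ ⊓ LinearMap.ker circ.flip) fun u hu w => by
      obtain ⟨hleft : circ u = 0, hright : circ.flip u = 0⟩ := hu
      have hw : circ w u = 0 := congr($hright w)
      simp [hleft, hw] with hbot | htop
    · simpa [hbot] using hv
    · have ha : circ a = 0 := (htop.ge (Submodule.mem_top (x := a))).1
      simp [ha] at hab
  · simpa [hx, hk] using hleft x

theorem NovikovSimple.eq_zero_of_apply_circ (hs : NovikovSimple circ) {D : V →ₗ[ℂ] V} {c : ℂ}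
    (hc : c ≠ 0) (hright : ∀ a b, D (circ a b) = circ (D a) b)
    (hleft : ∀ a b, D (circ a b) = circ a (D b) + c • D (circ b a)) : D = 0 := by
  obtain ⟨⟨a, b, hab⟩, hideal⟩ := hs
  rcases hideal (LinearMap.ker D) fun u hu w => by
    rw [LinearMap.mem_ker] at hu
    simp [hleft w u, hright, hu] with hbot | htop
  · have hD := LinearMap.ker_eq_bot'.mp hbot
    have := sq_smul_apply_apply_circ_eq_zero hright hleft a b
    exact absurd (hD _ (hD _ ((smul_eq_zero.mp this).resolve_left (pow_ne_zero 2 hc)))) hab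
  · exact LinearMap.ker_eq_top.mp htop

end NovikovAlgebra

section ConformalDerivation

open Polynomial

variable {V : Type*} [AddCommGroup V] [Module ℂ V] {circ : V →ₗ[ℂ] V →ₗ[ℂ] V}
  {d : ℕ → V →ₗ[ℂ] (ℂ → V)}

/-- The polynomial `d_l(a) = ∑ ∂ ^ i d^i_l(a) ∈ V[∂]`, whose values at `∂ = x` are the sums in
(E₀). -/
noncomputable def derivationPolynomial (hfin : ∀ a : V, {i : ℕ | d i a ≠ 0}.Finite)
    (a : V) (l : ℂ) : PolynomialModule ℂ V :=
  .ofCoeff ℂ (.ofSupportFinite (fun i => d i a l)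
    ((hfin a).subset fun i => mt fun h : d i a = 0 => congrFun h l))

theorem coeff_derivationPolynomial (hfin : ∀ a : V, {i : ℕ | d i a ≠ 0}.Finite)
    (a : V) (l : ℂ) (i : ℕ) :
    (derivationPolynomial hfin a l).coeff i = d i a l :=
  rfl

namespace ConfDerEqNov

variable (hE : ConfDerEqNov circ d) (hfin : ∀ a : V, {i : ℕ | d i a ≠ 0}.Finite)

include hE hfin

theorem eval_derivationPolynomial (a b : V) (l m x : ℂ) :
    ((X + C l : ℂ[X]) • derivationPolynomial hfin (circ b a) l).eval x
        + m • (derivationPolynomial hfin (circ a b + circ b a) l).eval x =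
      x • ((X + C l : ℂ[X]) ^ 0 • PolynomialModule.comp (-(X + C l))
          (.map ℂ (circ b) (derivationPolynomial hfin a l))).eval m
        + ((X + C l : ℂ[X]) ^ 1 • PolynomialModule.comp (-(X + C l))
          (.map ℂ (circ.flip b + circ b) (derivationPolynomial hfin a l))).eval m
        + x • (PolynomialModule.map ℂ (circ.flip a) (derivationPolynomial hfin b l)).eval (m + x)
        + m • (PolynomialModule.map ℂ (circ.flip a + circ a)
          (derivationPolynomial hfin b l)).eval (m + x) := by
  have eval_eq (v : V) (y : ℂ) (L : V →ₗ[ℂ] V) :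
      ∑ᶠ i, y ^ i • L (d i v l) = L ((derivationPolynomial hfin v l).eval y) := by
    rw [← PolynomialModule.eval_map', polynomialModule_eval_eq_finsum]
    simp only [polynomialModule_coeff_map, coeff_derivationPolynomial]
  have heval (v : V) (y : ℂ) := eval_eq v y LinearMap.id
  have ha := eval_eq a (-l - m) (x • circ b + (l + m) • (circ.flip b + circ b))
  have hb := eval_eq b (m + x) (x • circ.flip a + m • (circ.flip a + circ a))
  simp only [LinearMap.id_apply, LinearMap.add_apply, LinearMap.smul_apply, LinearMap.flip_apply]
    at heval ha hb
  have hE_eval := hE a b l m x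
  rw [heval, heval, ha, hb] at hE_eval
  simp only [PolynomialModule.eval_smul, PolynomialModule.comp_eval, PolynomialModule.eval_map',
    eval_add, eval_neg, eval_X, eval_C, pow_zero, pow_one, one_smul, LinearMap.add_apply,
    LinearMap.flip_apply]
  rw [hE_eval, show -(m + l) = -l - m by ring]
  module

theorem coeff_eq (a b : V) (l : ℂ) (i j : ℕ) :
    (if j = 0 then (if i = 0 then 0 else d (i - 1) (circ b a) l) + l • d i (circ b a) l else 0)
        + (if j = 1 then d i (circ a b + circ b a) l else 0) =
      (if i = 1 then
          ∑ᶠ k, ((-1) ^ k * k.choose j * l ^ (k - j) : ℂ) • circ b (d k a l) else 0)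
        + (if i = 0 then ∑ᶠ k, ((-1) ^ k * (k + 1).choose j * l ^ (k + 1 - j) : ℂ) •
          (circ (d k a l) b + circ b (d k a l)) else 0)
        + (if i = 0 then 0 else (i - 1 + j).choose j • circ (d (i - 1 + j) b l) a)
        + (if j = 0 then 0 else (i + (j - 1)).choose (j - 1) •
          (circ (d (i + (j - 1)) b l) a + circ a (d (i + (j - 1)) b l))) := by
  have := coeff_eq_of_forall_polynomialModule_eval_eq (hE.eval_derivationPolynomial hfin a b l) i j
  simp only [coeff_X_add_C_smul, coeff_X_add_C_pow_smul_comp, polynomialModule_coeff_map,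
    coeff_derivationPolynomial] at this
  exact this

theorem apply_circ_add_smul {i : ℕ} (hi : 1 ≤ i) (a b : V) (l : ℂ) :
    d i (circ b a) l + l • d (i + 1) (circ b a) l = circ (d i b l) a := by
  simpa [Nat.ne_of_gt hi] using hE.coeff_eq hfin a b l (i + 1) 0

theorem apply_circ_add_circ {i : ℕ} (hi : 2 ≤ i) (a b : V) (l : ℂ) :
    d i (circ a b + circ b a) l =
      i • circ (d i b l) a + (circ (d i b l) a + circ a (d i b l)) := by
  have := hE.coeff_eq hfin a b l i 1
  simpa [show i ≠ 0 by lia, show i ≠ 1 by lia, Nat.sub_add_cancel (one_le_two.trans hi)] using this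

theorem choose_smul_add_choose_smul (i j : ℕ) (a b : V) (l : ℂ) :
    (i + j + 3).choose (j + 2) • circ (d (i + j + 3) b l) a
      + (i + j + 3).choose (j + 1) •
        (circ (d (i + j + 3) b l) a + circ a (d (i + j + 3) b l)) = 0 := by
  have := hE.coeff_eq hfin a b l (i + 2) (j + 2)
  rw [show i + 2 - 1 + (j + 2) = i + j + 3 by lia,
    show i + 2 + (j + 2 - 1) = i + j + 3 by lia] at this
  simpa using this.symm

theorem circ_eq_zero_of_three_lt {n : ℕ} (hn : 3 < n) (a b : V) (l : ℂ) :
    circ (d n b l) a = 0 ∧ circ a (d n b l) = 0 := by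
  obtain ⟨k, rfl⟩ := Nat.exists_eq_add_of_le' hn
  have coeff_m_sq := hE.choose_smul_add_choose_smul hfin (k + 1) 0 a b l
  have coeff_x_sq := hE.choose_smul_add_choose_smul hfin 0 (k + 1) a b l
  rw [Nat.choose_symm_of_eq_add (show 0 + (k + 1) + 3 = (k + 1 + 2) + 1 by lia),
    Nat.choose_symm_of_eq_add (show 0 + (k + 1) + 3 = (k + 1 + 1) + 2 by lia)] at coeff_x_sq
  simp only [add_zero, zero_add, add_assoc, Nat.reduceAdd, Nat.choose_one_right,
    ← Nat.cast_smul_eq_nsmul ℂ] at coeff_m_sq coeff_x_sq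
  have choose_sq_ne : (((k + 4).choose 2 : ℕ) : ℂ) ^ 2 ≠ ((k + 4 : ℕ) : ℂ) ^ 2 :=
    mod_cast (Nat.pow_lt_pow_left (lt_choose_two hn) two_ne_zero).ne'
  obtain ⟨hright, hsum⟩ := eq_zero_of_smul_add_smul choose_sq_ne coeff_m_sq coeff_x_sq
  exact ⟨hright, by rwa [hright, zero_add] at hsum⟩

theorem two_smul_circ_add_circ (a b : V) (l : ℂ) :
    (2 : ℂ) • circ (d 3 b l) a + circ a (d 3 b l) = 0 := by
  linear_combination (norm := (simp [Nat.choose]; module))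
    (1 / 3 : ℂ) • hE.choose_smul_add_choose_smul hfin 0 0 a b l

theorem apply_three_circ (hd4 : d 4 = 0) (a b : V) (l : ℂ) :
    d 3 (circ b a) l = circ (d 3 b l) a := by
  simpa [hd4] using hE.apply_circ_add_smul hfin (i := 3) (by simp) a b l

theorem apply_three_circ_comm (hd4 : d 4 = 0) (a b : V) (l : ℂ) :
    d 3 (circ b a) l = d 3 (circ a b) l := by
  have hsum := hE.apply_circ_add_circ hfin (i := 3) (by simp) a b l
  have hleft := hE.two_smul_circ_add_circ hfin a b l
  have hcirc := hE.apply_three_circ hfin hd4 a b l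
  rw [map_add, Pi.add_apply] at hsum
  linear_combination (norm := module) 2 • hcirc - hsum - hleft

theorem circ_apply_three_comm (hd4 : d 4 = 0) (a b : V) (l : ℂ) :
    circ b (d 3 a l) = circ a (d 3 b l) := by
  have hb := hE.two_smul_circ_add_circ hfin a b l
  have ha := hE.two_smul_circ_add_circ hfin b a l
  rw [← hE.apply_three_circ hfin hd4] at ha hb
  rw [hE.apply_three_circ_comm hfin hd4] at hb
  linear_combination (norm := module) ha - hb

theorem coeff_zero_eq (hd : ∀ i, 3 < i → d i = 0) (a b : V) (l : ℂ) (j : ℕ) :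
    (if j = 0 then l • d 0 (circ b a) l else 0)
        + (if j = 1 then d 0 (circ a b + circ b a) l else 0) =
      ∑ k ∈ Finset.range 4, ((-1) ^ k * (k + 1).choose j * l ^ (k + 1 - j) : ℂ) •
          (circ (d k a l) b + circ b (d k a l))
        + (if j = 0 then 0 else circ (d (j - 1) b l) a + circ a (d (j - 1) b l)) := by
  have := hE.coeff_eq hfin a b l 0 j
  rw [finsum_eq_sum_range_of_forall_le (n := 4) (g := fun k =>
    ((-1) ^ k * (k + 1).choose j * l ^ (k + 1 - j) : ℂ) • (circ (d k a l) b + circ b (d k a l)))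
    fun k hk => by simp [hd k hk]] at this
  simpa using this

theorem coeff_one_eq (hd : ∀ i, 3 < i → d i = 0) (a b : V) (l : ℂ) (j : ℕ) :
    (if j = 0 then d 0 (circ b a) l + l • d 1 (circ b a) l else 0)
        + (if j = 1 then d 1 (circ a b + circ b a) l else 0) =
      ∑ k ∈ Finset.range 4, ((-1) ^ k * k.choose j * l ^ (k - j) : ℂ) • circ b (d k a l)
        + circ (d j b l) a + j • (circ (d j b l) a + circ a (d j b l)) := by
  have := hE.coeff_eq hfin a b l 1 j
  rw [if_pos rfl, finsum_eq_sum_range_of_forall_le (n := 4) fun k hk => by simp [hd k hk]] at this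
  rcases j with _ | j
  · simpa using this
  · simpa [add_comm 1 j] using this

theorem dIdentities (hd : ∀ i, 3 < i → d i = 0)
    (hsmul : ∀ i, 2 ≤ i → ∀ a l, l • d i a l = 0) : DIdentities circ 0 d := by
  intro a b l
  have hd4 : d 4 = 0 := hd 4 (by simp)
  have h0 := hE.coeff_zero_eq hfin hd a b l
  have h1 := hE.coeff_one_eq hfin hd a b l
  simp only [LinearMap.zero_apply, map_zero, Pi.zero_apply, smul_zero, zero_add, add_zero, sub_zero,
    Finset.sum_const_zero]
  refine ⟨⟨hE.apply_three_circ_comm hfin hd4 a b l, ?_⟩, hE.circ_apply_three_comm hfin hd4 a b l,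
    hE.two_smul_circ_add_circ hfin a b l, ?_, ?_, ?_, ?_, ?_, ?_, ?_, ?_, ?_, ?_⟩
  · rw [← hE.apply_three_circ_comm hfin hd4, hE.apply_three_circ hfin hd4]
  · rw [add_comm]
    exact hE.apply_circ_add_smul hfin one_le_two a b l
  · linear_combination (norm := module) hE.apply_circ_add_circ hfin le_rfl a b l
  · linear_combination (norm := (simp [Finset.sum_range_succ, Nat.choose]; module)) -h1 2
  · linear_combination (norm := (simp [Finset.sum_range_succ, Nat.choose]; module)) -h0 3
  · rw [add_comm]
    exact hE.apply_circ_add_smul hfin le_rfl a b l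
  -- The coefficient of `x μ` carries a factor `i` in the `i`-th term that (D9) does not have.
  · have hb (i : ℕ) (hi : 2 ≤ i) : l • circ b (d i a l) = 0 := by
      rw [← map_smul, hsmul i hi, map_zero]
    linear_combination (norm := (simp [Finset.sum_range_succ, Finset.sum_Icc_succ_top]; module))
      h1 1 + hb 2 le_rfl - (2 * l) • hb 3 (by simp)
  · linear_combination
      (norm := simp [Finset.sum_range_succ, Finset.sum_Icc_succ_top, Nat.choose]) -h0 2
  · linear_combination (norm := (simp [Finset.sum_range_succ]; module)) h1 0
  · linear_combination (norm := (simp [Finset.sum_range_succ]; module)) h0 1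
  · linear_combination (norm := (simp [Finset.sum_range_succ]; module)) h0 0

theorem apply_eq_zero_of_simple (hs : NovikovSimple circ) {i : ℕ} (hi : 2 ≤ i) {l : ℂ}
    (hsucc : ∀ a, d (i + 1) a l = 0) (a : V) : d i a l = 0 := by
  have hright (a b : V) : d i (circ a b) l = circ (d i a l) b := by
    simpa [hsucc] using hE.apply_circ_add_smul hfin (one_le_two.trans hi) b a l
  have hleft (a b : V) :
      d i (circ a b) l = circ a (d i b l) + (i : ℂ) • d i (circ b a) l := by
    have := hE.apply_circ_add_circ hfin hi a b l
    rw [map_add, Pi.add_apply, ← hright] at this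
    linear_combination (norm := module) this
  exact LinearMap.congr_fun
    (hs.eq_zero_of_apply_circ (D := LinearMap.proj l ∘ₗ d i) (c := i)
      (Nat.cast_ne_zero.mpr (by lia)) hright hleft) a

theorem smul_apply_eq_zero
    (hcase : NovikovSimple circ ∨ ∃ (x : V) (k : ℂ), k ≠ 0 ∧ ∀ b : V, circ b x = k • b)
    (hd : ∀ i, 3 < i → d i = 0) {i : ℕ} (hi : 2 ≤ i) (a : V) (l : ℂ) : l • d i a l = 0 := by
  rcases hcase with hs | ⟨x, k, hk, hx⟩
  · have hd3 (v : V) : d 3 v l = 0 :=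
      hE.apply_eq_zero_of_simple hfin hs (by simp) (by simp [hd 4]) v
    have hd2 (v : V) : d 2 v l = 0 := hE.apply_eq_zero_of_simple hfin hs le_rfl hd3 v
    obtain rfl | rfl | hi : i = 2 ∨ i = 3 ∨ 3 < i := by lia
    · rw [hd2, smul_zero]
    · rw [hd3, smul_zero]
    · simp [hd i hi]
  · obtain ⟨n, rfl⟩ := Nat.exists_eq_add_of_le' hi
    have := hE.apply_circ_add_smul hfin (i := n + 1) (by simp) x a l
    simpa [hx, hk, smul_comm l k] using this

end ConfDerEqNov

end ConformalDerivation

theorem stmt_13_general {V : Type*} [AddCommGroup V] [Module ℂ V]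
    (circ : V →ₗ[ℂ] V →ₗ[ℂ] V)
    (hcase : NovikovSimple circ
      ∨ ∃ (x : V) (k : ℂ), k ≠ 0 ∧ ∀ b : V, circ b x = k • b)
    (d : ℕ → V →ₗ[ℂ] (ℂ → V))
    (hfin : ∀ a : V, {i : ℕ | d i a ≠ 0}.Finite)
    (hE : ConfDerEqNov circ d) :
    (∀ i : ℕ, 3 < i → d i = 0)
      ∧ DIdentities circ (0 : V →ₗ[ℂ] V →ₗ[ℂ] V) d := by
  have hd (i : ℕ) (hi : 3 < i) : d i = 0 := by
    ext a l
    exact eq_zero_of_circ_eq_zero hcase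
      (fun b => (hE.circ_eq_zero_of_three_lt hfin hi b a l).1)
      (fun b => (hE.circ_eq_zero_of_three_lt hfin hi b a l).2)
  exact ⟨hd, hE.dIdentities hfin hd fun i hi => hE.smul_apply_eq_zero hfin hcase hd hi⟩

/-- Let `(V,∘)` be a Novikov algebra over `ℂ` (possibly
infinite-dimensional, with trivial Lie bracket) such that either `(V,∘)` is simple or
there exist `x ∈ V` and `k ≠ 0` with `b∘x = k·b` for all `b`.  If `(d^i)_{i∈ℕ}` is a
pointwise finitely supported family of linear maps from `V` into the space of
polynomial maps `ℂ → V` satisfying the Novikov conformal derivation equation (E₀),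
then `d^i = 0` for all `i > 3` and `d^0, d^1, d^2, d^3` satisfy (D1)–(D13) with the
Lie bracket taken to be zero. -/
theorem stmt_13 {V : Type*} [AddCommGroup V] [Module ℂ V]
    (circ : V →ₗ[ℂ] V →ₗ[ℂ] V)
    -- Novikov algebra axioms for `∘ = circ`
    (hNov1 : ∀ a b c : V, circ (circ a b) c - circ a (circ b c)
      = circ (circ b a) c - circ b (circ a c))
    (hNov2 : ∀ a b c : V, circ (circ a b) c = circ (circ a c) b)
    -- `(V,∘)` is simple, or has an element `x` with `b∘x = k·b` for all `b`
    (hcase : NovikovSimple circ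
      ∨ ∃ (x : V) (k : ℂ), k ≠ 0 ∧ ∀ b : V, circ b x = k • b)
    (d : ℕ → V →ₗ[ℂ] (ℂ → V))
    -- pointwise finite support in `i`
    (hfin : ∀ a : V, {i : ℕ | d i a ≠ 0}.Finite)
    -- each `d^i(a)` is a polynomial map `ℂ → V`
    (hpoly : ∀ (i : ℕ) (a : V), ∃ (N : ℕ) (v : ℕ → V),
      ∀ t : ℂ, d i a t = ∑ j ∈ Finset.range N, t ^ j • v j)
    (hE : ConfDerEqNov circ d) :
    (∀ i : ℕ, 3 < i → d i = 0)
      ∧ DIdentities circ (0 : V →ₗ[ℂ] V →ₗ[ℂ] V) d :=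
  stmt_13_general circ hcase d hfin hE
end
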